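/- Let 𝔤 be a complex simple Lie algebra regarded as a real Lie algebra with complex structure J, and 𝔥 a real semisimple Lie subalgebra with ρ_𝔥 ≰ ρ_{𝔤/𝔥}. Then 𝔥₀ := 𝔥 ∩ J𝔥 is a complex ideal of 𝔥, 𝔥 = 𝔥₀ ⊕ 𝔥₁ for a totally real ideal 𝔥₁ (i.e. 𝔥₁ ∩ J𝔥₁ = 0), and ρ_{𝔥₀} ≰ ρ_{𝔤/𝔥₀}. -/

import Mathlib

open Module TensorProduct

/-- Half the sum of `|Re λ|` over the complex eigenvalues `λ` (with multiplicity) of a real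
endomorphism of a finite-dimensional real vector space. -/
noncomputable def rho {V : Type*} [AddCommGroup V] [Module ℝ V] [Module.Finite ℝ V]
    (f : Module.End ℝ V) : ℝ :=
  (1 / 2) * (((f.baseChange ℂ : Module.End ℂ (ℂ ⊗[ℝ] V)).charpoly.roots.map
    fun z => |z.re|)).sum

section Charpoly

variable {K V W : Type*} [Field K] [AddCommGroup V] [Module K V] [Module.Finite K V]
  [AddCommGroup W] [Module K W] [Module.Finite K W]

theorem charpoly_eq_charpoly_restrict_mul_charpoly_mapQ [Infinite K] (f : End K V)
    (p : Submodule K V) (hp : p ≤ p.comap f) :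
    f.charpoly = (f.restrict hp).charpoly * (p.mapQ p f hp).charpoly := by
  refine Polynomial.funext fun t => ?_
  have ht : p ≤ p.comap (algebraMap K (End K V) t - f) := fun x hx =>
    p.sub_mem (p.smul_mem t hx) (hp hx)
  rw [Polynomial.eval_mul, LinearMap.eval_charpoly, LinearMap.eval_charpoly,
    LinearMap.eval_charpoly, LinearMap.det_eq_det_mul_det p _ ht]
  congr 2
  refine LinearMap.ext fun x => ?_
  obtain ⟨x, rfl⟩ := p.mkQ_surjective x
  simp

theorem charpoly_eq_of_intertwining (f : End K V) (g : End K W) (e : V ≃ₗ[K] W)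
    (h : ∀ x, e (f x) = g (e x)) : f.charpoly = g.charpoly := by
  rw [← e.charpoly_conj f]
  congr 1
  ext x
  simp [LinearEquiv.conj_apply, h]

theorem charpoly_restrict_sup_of_disjoint (f : End K V) {p q : Submodule K V}
    (hpq : Disjoint p q) (hp : p ≤ p.comap f) (hq : q ≤ q.comap f)
    (hs : p ⊔ q ≤ (p ⊔ q).comap f) :
    (f.restrict hs).charpoly = (f.restrict hp).charpoly * (f.restrict hq).charpoly := by
  rw [← LinearMap.charpoly_prodMap]
  let φ : (p × q) →ₗ[K] ↥(p ⊔ q) :=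
    (Submodule.inclusion le_sup_left).coprod (Submodule.inclusion le_sup_right)
  have hφ : Function.Bijective φ := by
    constructor
    · rw [injective_iff_map_eq_zero]
      rintro ⟨⟨x, hx⟩, ⟨y, hy⟩⟩ h
      have hxy : x + y = 0 := by simpa [φ] using congrArg Subtype.val h
      have hx0 : x = 0 := Submodule.disjoint_def.mp hpq x hx
        (by rw [eq_neg_of_add_eq_zero_left hxy]; exact q.neg_mem hy)
      subst hx0
      simpa using hxy
    · rintro ⟨z, hz⟩
      obtain ⟨x, hx, y, hy, rfl⟩ := Submodule.mem_sup.mp hz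
      exact ⟨(⟨x, hx⟩, ⟨y, hy⟩), rfl⟩
  refine (charpoly_eq_of_intertwining _ _ (LinearEquiv.ofBijective φ hφ) ?_).symm
  rintro ⟨x, y⟩
  ext
  simp [φ]

end Charpoly

section Rho

variable {V W : Type*} [AddCommGroup V] [Module ℝ V] [Module.Finite ℝ V]
  [AddCommGroup W] [Module ℝ W] [Module.Finite ℝ W]

theorem rho_eq_of_charpoly_eq {f : End ℝ V} {g : End ℝ W} (h : f.charpoly = g.charpoly) :
    rho f = rho g := by
  simp only [rho, LinearMap.charpoly_baseChange, h]

theorem rho_eq_add_of_charpoly_eq_mul {U : Type*} [AddCommGroup U] [Module ℝ U]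
    [Module.Finite ℝ U] {f : End ℝ V} {g : End ℝ W} {k : End ℝ U}
    (h : f.charpoly = g.charpoly * k.charpoly) : rho f = rho g + rho k := by
  simp only [rho, LinearMap.charpoly_baseChange, h, Polynomial.map_mul]
  rw [Polynomial.roots_mul (mul_ne_zero (g.charpoly_monic.map _).ne_zero
    (k.charpoly_monic.map _).ne_zero), Multiset.map_add, Multiset.sum_add, mul_add]

theorem rho_eq_restrict_add_mapQ (f : End ℝ V) (p : Submodule ℝ V) (hp : p ≤ p.comap f) :
    rho f = rho (f.restrict hp) + rho (p.mapQ p f hp) :=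
  rho_eq_add_of_charpoly_eq_mul (charpoly_eq_charpoly_restrict_mul_charpoly_mapQ f p hp)

theorem rho_restrict_sup_of_disjoint (f : End ℝ V) {p q : Submodule ℝ V}
    (hpq : Disjoint p q) (hp : p ≤ p.comap f) (hq : q ≤ q.comap f)
    (hs : p ⊔ q ≤ (p ⊔ q).comap f) :
    rho (f.restrict hs) = rho (f.restrict hp) + rho (f.restrict hq) :=
  rho_eq_add_of_charpoly_eq_mul (charpoly_restrict_sup_of_disjoint f hpq hp hq hs)

theorem rho_restrict_congr (f : End ℝ V) {p q : Submodule ℝ V} (h : p = q)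
    (hp : p ≤ p.comap f) (hq : q ≤ q.comap f) : rho (f.restrict hp) = rho (f.restrict hq) := by
  subst h
  rfl

theorem rho_zero : rho (0 : End ℝ V) = 0 := by
  simp [rho, IsNilpotent.zero.charpoly_eq_X_pow_finrank, Multiset.map_nsmul, Multiset.sum_nsmul]

/-- `f` acts trivially on `f⁻¹(p) / p`, so enlarging an invariant subspace `p` to `f⁻¹(p)` does not
change `rho`. -/
theorem rho_restrict_comap (f : End ℝ V) {p : Submodule ℝ V} (hp : p ≤ p.comap f)
    (hc : p.comap f ≤ (p.comap f).comap f) : rho (f.restrict hc) = rho (f.restrict hp) := by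
  have hp' : p.comap (p.comap f).subtype ≤
      (p.comap (p.comap f).subtype).comap (f.restrict hc) := fun x hx => hp hx
  have hzero : Submodule.mapQ _ _ (f.restrict hc) hp' = 0 := by
    refine Submodule.linearMap_qext _ (LinearMap.ext fun x => ?_)
    exact (Submodule.Quotient.mk_eq_zero _).mpr x.2
  rw [rho_eq_restrict_add_mapQ _ _ hp', hzero, rho_zero, add_zero]
  exact rho_eq_of_charpoly_eq (charpoly_eq_of_intertwining _ _
    (Submodule.comapSubtypeEquivOfLe hp) fun x => rfl)

end Rho

section CommutatorSpan

/-- The span of the commutators of endomorphisms commuting with `A`. -/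
def commutatorSpan {R V : Type*} [CommRing R] [AddCommGroup V] [Module R V] (A : End R V) :
    Submodule R (End R V) :=
  Submodule.span R {T | ∃ C D : End R V, Commute A C ∧ Commute A D ∧ T = C * D - D * C}

theorem baseChange_mem_commutatorSpan {V : Type*} [AddCommGroup V] [Module ℝ V]
    {A B : End ℝ V} (hB : B ∈ commutatorSpan A) :
    (B.baseChange ℂ : End ℂ (ℂ ⊗[ℝ] V)) ∈ commutatorSpan (A.baseChange ℂ : End ℂ (ℂ ⊗[ℝ] V)) := by
  induction hB using Submodule.span_induction with
  | mem T h =>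
    obtain ⟨C, D, hC, hD, rfl⟩ := h
    refine Submodule.subset_span ⟨C.baseChange ℂ, D.baseChange ℂ, ?_, ?_, ?_⟩
    · exact (LinearMap.baseChange_mul A C).symm.trans (hC ▸ LinearMap.baseChange_mul C A)
    · exact (LinearMap.baseChange_mul A D).symm.trans (hD ▸ LinearMap.baseChange_mul D A)
    · rw [← LinearMap.baseChange_mul, ← LinearMap.baseChange_mul, LinearMap.baseChange_sub]
  | zero => rw [LinearMap.baseChange_zero]; exact Submodule.zero_mem _
  | add x y _ _ hx hy => rw [LinearMap.baseChange_add]; exact Submodule.add_mem _ hx hy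
  | smul c x _ hx =>
    have : (c • x).baseChange ℂ = (c : ℂ) • x.baseChange ℂ := by
      rw [LinearMap.baseChange_smul]; ext; simp; rfl
    rw [this]
    exact Submodule.smul_mem _ _ hx

theorem exists_restrict_mapQ_of_mem_commutatorSpan {V : Type*} [AddCommGroup V] [Module ℂ V]
    {A B : End ℂ V} (hB : B ∈ commutatorSpan A) (a : ℂ)
    (hA : A.maxGenEigenspace a ≤ (A.maxGenEigenspace a).comap A) :
    ∃ h : A.maxGenEigenspace a ≤ (A.maxGenEigenspace a).comap B,
      LinearMap.trace ℂ _ (B.restrict h) = 0 ∧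
      Submodule.mapQ _ _ B h ∈ commutatorSpan (Submodule.mapQ _ _ A hA) := by
  induction hB using Submodule.span_induction with
  | mem T h =>
    obtain ⟨C, D, hC, hD, rfl⟩ := h
    have hC' : A.maxGenEigenspace a ≤ (A.maxGenEigenspace a).comap C :=
      End.mapsTo_maxGenEigenspace_of_comm hC a
    have hD' : A.maxGenEigenspace a ≤ (A.maxGenEigenspace a).comap D :=
      End.mapsTo_maxGenEigenspace_of_comm hD a
    refine ⟨fun x hx => Submodule.sub_mem (A.maxGenEigenspace a) (hC' (hD' hx)) (hD' (hC' hx)), ?_, ?_⟩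
    · have : (C * D - D * C).restrict (fun x hx => Submodule.sub_mem (A.maxGenEigenspace a) (hC' (hD' hx))
          (hD' (hC' hx))) = C.restrict hC' * D.restrict hD' - D.restrict hD' * C.restrict hC' := by
        ext; rfl
      rw [this, map_sub, LinearMap.trace_mul_comm, sub_self]
    · refine Submodule.subset_span ⟨Submodule.mapQ _ _ C hC', Submodule.mapQ _ _ D hD', ?_, ?_, ?_⟩
      · refine Submodule.linearMap_qext _ (LinearMap.ext fun x => ?_)
        exact congrArg (Submodule.mkQ _) (LinearMap.congr_fun hC x)
      · refine Submodule.linearMap_qext _ (LinearMap.ext fun x => ?_)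
        exact congrArg (Submodule.mkQ _) (LinearMap.congr_fun hD x)
      · exact Submodule.linearMap_qext _ (LinearMap.ext fun x => rfl)
  | zero =>
    refine ⟨fun x _ => Submodule.zero_mem (A.maxGenEigenspace a), ?_, ?_⟩
    · exact map_zero (LinearMap.trace ℂ _)
    · convert Submodule.zero_mem _
      exact Submodule.linearMap_qext _ (LinearMap.ext fun x => rfl)
  | add x y _ _ hx hy =>
    obtain ⟨hx, tx, mx⟩ := hx
    obtain ⟨hy, ty, my⟩ := hy
    refine ⟨fun v hv => Submodule.add_mem (A.maxGenEigenspace a) (hx hv) (hy hv), ?_, ?_⟩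
    · exact (map_add (LinearMap.trace ℂ _) (x.restrict hx) (y.restrict hy)).trans (by simp [tx, ty])
    · convert Submodule.add_mem _ mx my
      exact Submodule.linearMap_qext _ (LinearMap.ext fun x => rfl)
  | smul c x _ hx =>
    obtain ⟨hx, tx, mx⟩ := hx
    refine ⟨fun v hv => Submodule.smul_mem (A.maxGenEigenspace a) c (hx hv), ?_, ?_⟩
    · exact (map_smul (LinearMap.trace ℂ _) c (x.restrict hx)).trans (by simp [tx])
    · convert Submodule.smul_mem _ c mx
      exact Submodule.linearMap_qext _ (LinearMap.ext fun x => rfl)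

variable {V : Type*} [AddCommGroup V] [Module ℂ V] [Module.Finite ℂ V]

theorem abs_re_trace_le_sum_abs_re_roots (f : End ℂ V) :
    |(LinearMap.trace ℂ V f).re| ≤ (f.charpoly.roots.map fun z => |z.re|).sum := by
  rw [End.trace_eq_sum_roots_charpoly_of_splits (IsAlgClosed.splits _)]
  induction f.charpoly.roots using Multiset.induction_on with
  | empty => simp
  | cons a s ih =>
    simp only [Multiset.sum_cons, Multiset.map_cons, Complex.add_re]
    exact (abs_add_le _ _).trans (by gcongr)

theorem sum_abs_re_roots_eq_of_isNilpotent_sub (f : End ℂ V) (a : ℂ)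
    (h : IsNilpotent (f - algebraMap ℂ (End ℂ V) a)) :
    (f.charpoly.roots.map fun z => |z.re|).sum = |(LinearMap.trace ℂ V f).re| := by
  have hroots : ∀ z ∈ f.charpoly.roots, z = a := by
    intro z hz
    have hz' : f.HasEigenvalue z :=
      (End.hasEigenvalue_iff_isRoot_charpoly f z).mpr (Polynomial.isRoot_of_mem_roots hz)
    obtain ⟨v, hv⟩ := hz'.exists_hasEigenvector
    obtain ⟨n, hn⟩ := h
    have hpow : ∀ k : ℕ, ((f - algebraMap ℂ (End ℂ V) a) ^ k) v = (z - a) ^ k • v := by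
      intro k
      induction k with
      | zero => simp
      | succ k ih =>
        rw [pow_succ', Module.End.mul_apply, ih, map_smul, LinearMap.sub_apply, hv.apply_eq_smul,
          Module.algebraMap_end_apply, ← sub_smul, smul_smul, pow_succ]
    have := hpow n
    rw [hn, LinearMap.zero_apply, eq_comm, smul_eq_zero, or_iff_left hv.2] at this
    exact sub_eq_zero.mp (eq_zero_of_pow_eq_zero this)
  rw [End.trace_eq_sum_roots_charpoly_of_splits (IsAlgClosed.splits _),
    Multiset.eq_replicate_card.mpr hroots]
  simp [abs_mul]

theorem sum_abs_re_roots_restrict_add_mapQ (f : End ℂ V) (p : Submodule ℂ V)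
    (hp : p ≤ p.comap f) :
    (f.charpoly.roots.map fun z => |z.re|).sum =
      ((f.restrict hp).charpoly.roots.map fun z => |z.re|).sum +
        ((p.mapQ p f hp).charpoly.roots.map fun z => |z.re|).sum := by
  rw [charpoly_eq_charpoly_restrict_mul_charpoly_mapQ f p hp, Polynomial.roots_mul
    (mul_ne_zero (LinearMap.charpoly_monic _).ne_zero (LinearMap.charpoly_monic _).ne_zero),
    Multiset.map_add, Multiset.sum_add]

end CommutatorSpan

theorem sum_abs_re_roots_le_of_mem_commutatorSpan (n : ℕ) :
    ∀ {V : Type*} [AddCommGroup V] [Module ℂ V] [Module.Finite ℂ V] {A B : End ℂ V},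
      finrank ℂ V = n → B ∈ commutatorSpan A →
      (A.charpoly.roots.map fun z => |z.re|).sum ≤
        ((A + B).charpoly.roots.map fun z => |z.re|).sum := by
  induction n using Nat.strong_induction_on with
  | _ n ih =>
  intro V _ _ _ A B hn hB
  cases subsingleton_or_nontrivial V with
  | inl h => rw [Subsingleton.elim (A + B) A]
  | inr h =>
  obtain ⟨a, ha⟩ := End.exists_eigenvalue A
  have hA : A.maxGenEigenspace a ≤ (A.maxGenEigenspace a).comap A :=
    End.mapsTo_maxGenEigenspace_of_comm (Commute.refl A) a
  obtain ⟨hB', htr, hmem⟩ := exists_restrict_mapQ_of_mem_commutatorSpan hB a hA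
  have hAB : A.maxGenEigenspace a ≤ (A.maxGenEigenspace a).comap (A + B) :=
    fun x hx => Submodule.add_mem (A.maxGenEigenspace a) (hA hx) (hB' hx)
  rw [sum_abs_re_roots_restrict_add_mapQ A _ hA, sum_abs_re_roots_restrict_add_mapQ (A + B) _ hAB]
  refine add_le_add ?_ ?_
  · rw [sum_abs_re_roots_eq_of_isNilpotent_sub (A.restrict hA) a
      (End.isNilpotent_restrict_maxGenEigenspace_sub_algebraMap A a)]
    have : LinearMap.trace ℂ _ ((A + B).restrict hAB) = LinearMap.trace ℂ _ (A.restrict hA) :=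
      (map_add (LinearMap.trace ℂ _) (A.restrict hA) (B.restrict hB')).trans (by simp [htr])
    rw [← this]
    exact abs_re_trace_le_sum_abs_re_roots _
  · have hlt : finrank ℂ (V ⧸ A.maxGenEigenspace a) < n := by
      rw [← hn]
      have hpos : 0 < finrank ℂ (A.maxGenEigenspace a) :=
        Submodule.one_le_finrank_iff.mpr fun h0 =>
          ha (eq_bot_iff.mpr (h0 ▸ End.eigenspace_le_maxGenEigenspace))
      have := (A.maxGenEigenspace a).finrank_quotient_add_finrank
      lia
    have hsum : Submodule.mapQ _ _ (A + B) hAB =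
        Submodule.mapQ _ _ A hA + Submodule.mapQ _ _ B hB' :=
      Submodule.linearMap_qext _ (LinearMap.ext fun x => rfl)
    rw [hsum]
    exact ih _ hlt rfl hmem

theorem rho_le_rho_add_of_mem_commutatorSpan {V : Type*} [AddCommGroup V] [Module ℝ V]
    [Module.Finite ℝ V] {A B : End ℝ V} (hB : B ∈ commutatorSpan A) : rho A ≤ rho (A + B) := by
  rw [rho, rho, LinearMap.baseChange_add]
  gcongr
  exact sum_abs_re_roots_le_of_mem_commutatorSpan _ rfl (baseChange_mem_commutatorSpan hB)

section Semisimple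

variable {R L : Type*} [CommRing R] [LieRing L] [LieAlgebra R L] [LieAlgebra.IsSemisimple R L]

theorem LieAlgebra.IsSemisimple.exists_isCompl (I : LieIdeal R L) :
    ∃ I' : LieIdeal R L, I ⊓ I' = ⊥ ∧ I ⊔ I' = ⊤ :=
  ⟨Iᶜ, inf_compl_eq_bot, sup_compl_eq_top⟩

theorem LieAlgebra.IsSemisimple.lie_top_top : ⁅(⊤ : LieIdeal R L), (⊤ : LieIdeal R L)⁆ = ⊤ := by
  rw [eq_top_iff, ← LieAlgebra.IsSemisimple.sSup_atoms_eq_top (R := R) (L := L)]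
  refine sSup_le fun I hI => ?_
  rw [← lie_eq_self_of_isAtom_of_nonabelian I hI
    (LieAlgebra.IsSemisimple.non_abelian_of_isAtom I hI)]
  exact LieSubmodule.mono_lie (le_sSup hI) (le_sSup hI)

theorem LieAlgebra.IsSemisimple.mem_span_lie (x : L) :
    x ∈ Submodule.span R {z : L | ∃ x y : L, ⁅x, y⁆ = z} := by
  have hx : x ∈ ⁅(⊤ : LieIdeal R L), (⊤ : LieIdeal R L)⁆ := by
    rw [LieAlgebra.IsSemisimple.lie_top_top]; trivial
  rw [← LieSubmodule.mem_toSubmodule, LieSubmodule.lieIdeal_oper_eq_linear_span'] at hx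
  refine Submodule.span_mono ?_ hx
  rintro z ⟨x, -, y, -, rfl⟩
  exact ⟨x, y, rfl⟩

end Semisimple

section Subalgebra

variable {L : Type*} [LieRing L] [LieAlgebra ℝ L]

/-- An ideal of a semisimple subalgebra, seen as a subspace of the ambient algebra, has a
complementary ideal. -/
theorem LieSubalgebra.exists_ideal_compl (𝔥 : LieSubalgebra ℝ L) [LieAlgebra.IsSemisimple ℝ 𝔥]
    {p : Submodule ℝ L} (hp : p ≤ 𝔥.toSubmodule) (hp' : ∀ x ∈ 𝔥, ∀ y ∈ p, ⁅x, y⁆ ∈ p) :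
    ∃ q : Submodule ℝ L, q ≤ 𝔥.toSubmodule ∧ (∀ x ∈ 𝔥, ∀ y ∈ q, ⁅x, y⁆ ∈ q) ∧
      p ⊓ q = ⊥ ∧ p ⊔ q = 𝔥.toSubmodule := by
  let I : LieIdeal ℝ 𝔥 :=
    { p.comap 𝔥.toSubmodule.subtype with lie_mem := fun {x y} hy => hp' x x.2 y hy }
  obtain ⟨I', hinf, hsup⟩ := LieAlgebra.IsSemisimple.exists_isCompl I
  refine ⟨I'.toSubmodule.map 𝔥.toSubmodule.subtype, ?_, ?_, ?_, ?_⟩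
  · rintro _ ⟨y, -, rfl⟩
    exact y.2
  · rintro x hx _ ⟨y, hy, rfl⟩
    exact ⟨⁅(⟨x, hx⟩ : 𝔥), y⁆, I'.lie_mem hy, rfl⟩
  · rw [_root_.eq_bot_iff]
    rintro _ ⟨hx, y, hy, rfl⟩
    have hy' : y ∈ I ⊓ I' := ⟨hx, hy⟩
    rw [hinf, LieSubmodule.mem_bot] at hy'
    simp [hy']
  · refine le_antisymm (sup_le hp ?_) fun x hx => ?_
    · rintro _ ⟨y, -, rfl⟩
      exact y.2
    · have hx' : (⟨x, hx⟩ : 𝔥) ∈ I ⊔ I' := by rw [hsup]; trivial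
      obtain ⟨y, hy, z, hz, hyz⟩ := (LieSubmodule.mem_sup _ _ _).mp hx'
      exact Submodule.mem_sup.mpr ⟨y, hy, z, ⟨z, hz, rfl⟩, congrArg Subtype.val hyz⟩

theorem LieSubalgebra.lie_eq_zero_of_disjoint_ideals (𝔥 : LieSubalgebra ℝ L)
    {p q : Submodule ℝ L} (hp : p ≤ 𝔥.toSubmodule) (hq : q ≤ 𝔥.toSubmodule)
    (hp' : ∀ x ∈ 𝔥, ∀ y ∈ p, ⁅x, y⁆ ∈ p) (hq' : ∀ x ∈ 𝔥, ∀ y ∈ q, ⁅x, y⁆ ∈ q)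
    (hpq : p ⊓ q = ⊥) {x y : L} (hx : x ∈ p) (hy : y ∈ q) : ⁅x, y⁆ = 0 := by
  have h : ⁅x, y⁆ ∈ p ⊓ q :=
    ⟨by rw [← lie_skew]; exact p.neg_mem (hp' y (hq hy) x hx), hq' x (hp hx) y hy⟩
  simpa [hpq] using h

/-- In a semisimple subalgebra decomposed as a sum of two commuting pieces, the second component
of an element may be taken to be a sum of brackets. -/
theorem LieSubalgebra.exists_add_mem_span_lie (𝔥 : LieSubalgebra ℝ L)
    [LieAlgebra.IsSemisimple ℝ 𝔥] {p q : Submodule ℝ L} (hsup : p ⊔ q = 𝔥.toSubmodule)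
    (hp' : ∀ x ∈ 𝔥, ∀ y ∈ p, ⁅x, y⁆ ∈ p) (hcomm : ∀ x ∈ p, ∀ y ∈ q, ⁅x, y⁆ = 0)
    {x : L} (hx : x ∈ 𝔥) :
    ∃ x₀ ∈ p, ∃ x₁ ∈ Submodule.span ℝ {z : L | ∃ u ∈ q, ∃ v ∈ q, ⁅u, v⁆ = z}, x₀ + x₁ = x := by
  rw [← Submodule.mem_sup]
  suffices h : ∀ y ∈ Submodule.span ℝ {z : 𝔥 | ∃ x y : 𝔥, ⁅x, y⁆ = z},
      (y : L) ∈ p ⊔ Submodule.span ℝ {z : L | ∃ u ∈ q, ∃ v ∈ q, ⁅u, v⁆ = z} from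
    h ⟨x, hx⟩ (LieAlgebra.IsSemisimple.mem_span_lie _)
  intro y hy
  induction hy using Submodule.span_induction with
  | mem z hz =>
    obtain ⟨⟨a, ha⟩, ⟨b, hb⟩, rfl⟩ := hz
    obtain ⟨a₀, ha₀, a₁, ha₁, rfl⟩ := Submodule.mem_sup.mp (hsup.ge ha)
    obtain ⟨b₀, hb₀, b₁, hb₁, rfl⟩ := Submodule.mem_sup.mp (hsup.ge hb)
    refine Submodule.mem_sup.mpr ⟨⁅a₀, b₀⁆, ?_, ⁅a₁, b₁⁆, Submodule.subset_span
      ⟨a₁, ha₁, b₁, hb₁, rfl⟩, ?_⟩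
    · exact hp' _ (hsup.le (Submodule.mem_sup_left ha₀)) _ hb₀
    · have h₁₀ : ⁅a₁, b₀⁆ = 0 := by rw [← lie_skew, hcomm _ hb₀ _ ha₁, neg_zero]
      simp [hcomm _ ha₀ _ hb₁, h₁₀]
  | zero => exact Submodule.zero_mem _
  | add u v _ _ hu hv => exact Submodule.add_mem _ hu hv
  | smul c u _ hu => exact Submodule.smul_mem _ c hu

theorem exists_mapQ_ad_mem_commutatorSpan {N q : Submodule ℝ L}
    (hq : ∀ x ∈ q, N ≤ N.comap (LieAlgebra.ad ℝ L x)) {x₀ x₁ : L}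
    (hN : N ≤ N.comap (LieAlgebra.ad ℝ L x₀)) (hcomm : ∀ y ∈ q, ⁅x₀, y⁆ = 0)
    (hx₁ : x₁ ∈ Submodule.span ℝ {z : L | ∃ u ∈ q, ∃ v ∈ q, ⁅u, v⁆ = z}) :
    ∃ h : N ≤ N.comap (LieAlgebra.ad ℝ L x₁),
      N.mapQ N (LieAlgebra.ad ℝ L x₁) h ∈
        commutatorSpan (N.mapQ N (LieAlgebra.ad ℝ L x₀) hN) := by
  have hcommute : ∀ u (hu : u ∈ q), Commute (N.mapQ N (LieAlgebra.ad ℝ L x₀) hN)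
      (N.mapQ N (LieAlgebra.ad ℝ L u) (hq u hu)) := fun u hu => by
    refine Submodule.linearMap_qext _ (LinearMap.ext fun x => ?_)
    refine congrArg N.mkQ ?_
    change ⁅x₀, ⁅u, x⁆⁆ = ⁅u, ⁅x₀, x⁆⁆
    rw [leibniz_lie, hcomm u hu, zero_lie, zero_add]
  induction hx₁ using Submodule.span_induction with
  | mem z hz =>
    obtain ⟨u, hu, v, hv, rfl⟩ := hz
    have h : N ≤ N.comap (LieAlgebra.ad ℝ L ⁅u, v⁆) := fun x hx => by
      rw [Submodule.mem_comap, LieAlgebra.ad_apply, lie_lie]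
      exact N.sub_mem (hq u hu (hq v hv hx)) (hq v hv (hq u hu hx))
    refine ⟨h, Submodule.subset_span ⟨_, _, hcommute u hu, hcommute v hv, ?_⟩⟩
    exact Submodule.linearMap_qext _ (LinearMap.ext fun x => congrArg N.mkQ (lie_lie u v x))
  | zero =>
    refine ⟨fun x _ => by simp, ?_⟩
    convert Submodule.zero_mem _
    exact Submodule.linearMap_qext _ (LinearMap.ext fun x => congrArg N.mkQ (zero_lie x))
  | add u v _ _ hu hv =>
    obtain ⟨hu, mu⟩ := hu
    obtain ⟨hv, mv⟩ := hv
    refine ⟨fun x hx => by simpa using N.add_mem (hu hx) (hv hx), ?_⟩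
    convert Submodule.add_mem _ mu mv
    exact Submodule.linearMap_qext _ (LinearMap.ext fun x => congrArg N.mkQ (add_lie u v x))
  | smul c u _ hu =>
    obtain ⟨hu, mu⟩ := hu
    refine ⟨fun x hx => by simpa using N.smul_mem c (hu hx), ?_⟩
    convert Submodule.smul_mem _ c mu
    exact Submodule.linearMap_qext _ (LinearMap.ext fun x => congrArg N.mkQ (smul_lie c u x))

end Subalgebra

/-- Let `𝔤` be a complex simple Lie algebra regarded as a real Lie algebra
with complex structure `J = i•`, and `𝔥` a real semisimple subalgebra with
`ρ_𝔥 ≰ ρ_{𝔤/𝔥}`.  Then `𝔥₀ := 𝔥 ∩ J𝔥` is a complex ideal of `𝔥`, `𝔥 = 𝔥₀ ⊕ 𝔥₁` for a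
totally real ideal `𝔥₁` (i.e. `𝔥₁ ∩ J𝔥₁ = 0`), and `ρ_{𝔥₀} ≰ ρ_{𝔤/𝔥₀}`. -/
theorem complex_ideal_not_rho_le
    (L : Type*) [LieRing L] [LieAlgebra ℝ L] [LieAlgebra ℂ L]
    [IsScalarTower ℝ ℂ L] [LieAlgebra.IsSimple ℂ L] [Module.Finite ℝ L]
    (J : L →ₗ[ℝ] L) (hJ : ∀ x : L, J x = (Complex.I : ℂ) • x)
    (𝔥 : LieSubalgebra ℝ L) [LieAlgebra.IsSemisimple ℝ 𝔥]
    -- `ρ_𝔥 ≰ ρ_{𝔤/𝔥}` : a witness `X ∈ 𝔥`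
    (hwit : ∃ X : L, ∃ _ : X ∈ 𝔥,
      ∃ hmap : 𝔥.toSubmodule ≤ 𝔥.toSubmodule.comap (LieAlgebra.ad ℝ L X),
        rho (Submodule.mapQ 𝔥.toSubmodule 𝔥.toSubmodule (LieAlgebra.ad ℝ L X) hmap) <
          rho ((LieAlgebra.ad ℝ L X).restrict fun x hx => hmap hx))
    (𝔥₀ : Submodule ℝ L) (h𝔥₀ : 𝔥₀ = 𝔥.toSubmodule ⊓ 𝔥.toSubmodule.map J) :
    -- `𝔥₀` is a complex (J-stable) ideal of `𝔥`
    (∀ x ∈ 𝔥₀, J x ∈ 𝔥₀) ∧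
    (∀ x ∈ 𝔥, ∀ y ∈ 𝔥₀, ⁅x, y⁆ ∈ 𝔥₀) ∧
    -- `𝔥 = 𝔥₀ ⊕ 𝔥₁` for a totally real ideal `𝔥₁`
    (∃ 𝔥₁ : Submodule ℝ L, 𝔥₁ ≤ 𝔥.toSubmodule ∧
      (∀ x ∈ 𝔥, ∀ y ∈ 𝔥₁, ⁅x, y⁆ ∈ 𝔥₁) ∧
      𝔥₀ ⊓ 𝔥₁ = ⊥ ∧ 𝔥₀ ⊔ 𝔥₁ = 𝔥.toSubmodule ∧
      𝔥₁ ⊓ 𝔥₁.map J = ⊥) ∧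
    -- `ρ_{𝔥₀} ≰ ρ_{𝔤/𝔥₀}`
    (∃ X : L, ∃ _ : X ∈ 𝔥₀,
      ∃ hmap : 𝔥₀ ≤ 𝔥₀.comap (LieAlgebra.ad ℝ L X),
        rho (Submodule.mapQ 𝔥₀ 𝔥₀ (LieAlgebra.ad ℝ L X) hmap) <
          rho ((LieAlgebra.ad ℝ L X).restrict fun x hx => hmap hx)) := by
  have hJJ : ∀ x : L, J (J x) = -x := fun x => by
    rw [hJ, hJ, smul_smul, Complex.I_mul_I, neg_one_smul]
  have hJinj : Function.Injective J := fun x y h => by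
    simpa [hJJ] using congrArg J h
  have hJlie : ∀ x y : L, ⁅x, J y⁆ = J ⁅x, y⁆ := fun x y => by rw [hJ, hJ, lie_smul]
  have h₀le : 𝔥₀ ≤ 𝔥.toSubmodule := h𝔥₀.le.trans inf_le_left
  have h₀J : ∀ x ∈ 𝔥₀, J x ∈ 𝔥₀ := by
    subst h𝔥₀
    rintro x ⟨hx, y, hy, rfl⟩
    exact ⟨by rw [hJJ]; exact neg_mem hy, Submodule.mem_map_of_mem hx⟩
  have h₀ideal : ∀ x ∈ 𝔥, ∀ y ∈ 𝔥₀, ⁅x, y⁆ ∈ 𝔥₀ := by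
    subst h𝔥₀
    rintro x hx y ⟨hy, z, hz, rfl⟩
    exact ⟨𝔥.lie_mem hx hy, by rw [hJlie]; exact Submodule.mem_map_of_mem (𝔥.lie_mem hx hz)⟩
  have hmem₀ : ∀ x ∈ 𝔥, J x ∈ 𝔥 → x ∈ 𝔥₀ := by
    intro x hx hJx
    rw [h𝔥₀]
    exact ⟨hx, -J x, neg_mem hJx, by rw [map_neg, hJJ, neg_neg]⟩
  obtain ⟨𝔥₁, h₁le, h₁ideal, hinf, hsup⟩ := 𝔥.exists_ideal_compl h₀le h₀ideal
  have hinf' : ∀ x ∈ 𝔥₀, x ∈ 𝔥₁ → x = 0 := fun x hx hx' => by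
    have h : x ∈ 𝔥₀ ⊓ 𝔥₁ := ⟨hx, hx'⟩
    simpa [hinf] using h
  have hdisj : Disjoint 𝔥.toSubmodule (𝔥₁.map J) := by
    rw [Submodule.disjoint_def]
    rintro _ hx ⟨y, hy, rfl⟩
    rw [hinf' y (hmem₀ y (h₁le hy) hx) hy, map_zero]
  have hcomm : ∀ x ∈ 𝔥₀, ∀ y ∈ 𝔥₁, ⁅x, y⁆ = 0 := fun x hx y hy =>
    𝔥.lie_eq_zero_of_disjoint_ideals h₀le h₁le h₀ideal h₁ideal hinf hx hy
  refine ⟨h₀J, h₀ideal, ⟨𝔥₁, h₁le, h₁ideal, hinf, hsup, (hdisj.mono_left h₁le).eq_bot⟩, ?_⟩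
  obtain ⟨X, hX, hmap, hlt⟩ := hwit
  obtain ⟨X₀, hX₀, X₁, hX₁, rfl⟩ := 𝔥.exists_add_mem_span_lie hsup h₀ideal hcomm hX
  have hX₁mem : X₁ ∈ 𝔥₁ := by
    refine Submodule.span_le.mpr ?_ hX₁
    rintro _ ⟨u, hu, v, hv, rfl⟩
    exact h₁ideal u (h₁le hu) v hv
  have inv₀ : ∀ x ∈ 𝔥, 𝔥₀ ≤ 𝔥₀.comap (LieAlgebra.ad ℝ L x) := h₀ideal
  have inv₁ : ∀ x ∈ 𝔥, 𝔥₁ ≤ 𝔥₁.comap (LieAlgebra.ad ℝ L x) := h₁ideal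
  have inv𝔥 : ∀ x ∈ 𝔥, 𝔥.toSubmodule ≤ 𝔥.toSubmodule.comap (LieAlgebra.ad ℝ L x) :=
    fun x hx y hy => 𝔥.lie_mem hx hy
  have invJ : ∀ x ∈ 𝔥, 𝔥₁.map J ≤ (𝔥₁.map J).comap (LieAlgebra.ad ℝ L x) := by
    rintro x hx _ ⟨y, hy, rfl⟩
    exact ⟨⁅x, y⁆, h₁ideal x hx y hy, (hJlie x y).symm⟩
  have invsup : ∀ x ∈ 𝔥, 𝔥₀ ⊔ 𝔥₁ ≤ (𝔥₀ ⊔ 𝔥₁).comap (LieAlgebra.ad ℝ L x) := by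
    rw [hsup]; exact inv𝔥
  have invN : ∀ x ∈ 𝔥, 𝔥.toSubmodule ⊔ 𝔥₁.map J ≤
      (𝔥.toSubmodule ⊔ 𝔥₁.map J).comap (LieAlgebra.ad ℝ L x) := fun x hx =>
    sup_le ((inv𝔥 x hx).trans (Submodule.comap_mono le_sup_left))
      ((invJ x hx).trans (Submodule.comap_mono le_sup_right))
  have rho_𝔥 : ∀ x (hx : x ∈ 𝔥), rho ((LieAlgebra.ad ℝ L x).restrict (inv𝔥 x hx)) =
      rho ((LieAlgebra.ad ℝ L x).restrict (inv₀ x hx)) +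
        rho ((LieAlgebra.ad ℝ L x).restrict (inv₁ x hx)) := fun x hx => by
    rw [← rho_restrict_sup_of_disjoint _ (disjoint_iff.mpr hinf) _ _ (invsup x hx)]
    exact rho_restrict_congr _ hsup.symm _ _
  have rho_J : ∀ x (hx : x ∈ 𝔥), rho ((LieAlgebra.ad ℝ L x).restrict (invJ x hx)) =
      rho ((LieAlgebra.ad ℝ L x).restrict (inv₁ x hx)) := fun x hx => by
    refine (rho_eq_of_charpoly_eq (charpoly_eq_of_intertwining _ _
      (Submodule.equivMapOfInjective J hJinj 𝔥₁) fun y => ?_)).symm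
    ext
    simp [hJlie]
  have rho_L : ∀ x (hx : x ∈ 𝔥), rho (LieAlgebra.ad ℝ L x) =
      rho ((LieAlgebra.ad ℝ L x).restrict (inv₀ x hx)) +
        2 * rho ((LieAlgebra.ad ℝ L x).restrict (inv₁ x hx)) +
        rho (Submodule.mapQ _ _ (LieAlgebra.ad ℝ L x) (invN x hx)) := fun x hx => by
    rw [rho_eq_restrict_add_mapQ _ _ (invN x hx),
      rho_restrict_sup_of_disjoint _ hdisj (inv𝔥 x hx) (invJ x hx), rho_𝔥 x hx, rho_J x hx]
    ring
  have hX₀𝔥 : X₀ ∈ 𝔥 := h₀le hX₀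
  have rho_X₀_zero : rho ((LieAlgebra.ad ℝ L X₀).restrict (inv₁ X₀ hX₀𝔥)) = 0 := by
    convert rho_zero (V := 𝔥₁)
    ext y
    exact hcomm X₀ hX₀ y y.2
  have rho_X₀ : rho ((LieAlgebra.ad ℝ L (X₀ + X₁)).restrict (inv₀ _ hX)) =
      rho ((LieAlgebra.ad ℝ L X₀).restrict (inv₀ X₀ hX₀𝔥)) := by
    congr 1
    ext y
    have hy : ⁅X₁, (y : L)⁆ = 0 := by rw [← lie_skew, hcomm y y.2 X₁ hX₁mem, neg_zero]
    simp [hy]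
  obtain ⟨hN₁, hspan⟩ := exists_mapQ_ad_mem_commutatorSpan (fun x hx => invN x (h₁le hx))
    (invN X₀ hX₀𝔥) (hcomm X₀ hX₀) hX₁
  have hle : rho (Submodule.mapQ _ _ (LieAlgebra.ad ℝ L X₀) (invN X₀ hX₀𝔥)) ≤
      rho (Submodule.mapQ _ _ (LieAlgebra.ad ℝ L (X₀ + X₁)) (invN _ hX)) := by
    convert rho_le_rho_add_of_mem_commutatorSpan hspan
    exact Submodule.linearMap_qext _
      (LinearMap.ext fun x => congrArg (Submodule.mkQ _) (add_lie X₀ X₁ x))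
  refine ⟨X₀, hX₀, inv₀ X₀ hX₀𝔥, ?_⟩
  have hwit₀ : rho (LieAlgebra.ad ℝ L (X₀ + X₁)) <
      2 * rho ((LieAlgebra.ad ℝ L (X₀ + X₁)).restrict (inv𝔥 _ hX)) := by
    rw [rho_eq_restrict_add_mapQ _ _ (inv𝔥 _ hX), two_mul]
    refine add_lt_add_right ?_ _
    rw [← rho_restrict_comap _ (inv𝔥 _ hX) fun x hx => hmap hx]
    exact hlt
  suffices h : rho (LieAlgebra.ad ℝ L X₀) <
      2 * rho ((LieAlgebra.ad ℝ L X₀).restrict (inv₀ X₀ hX₀𝔥)) by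
    rw [rho_eq_restrict_add_mapQ _ _ (inv₀ X₀ hX₀𝔥), two_mul] at h
    rw [rho_restrict_comap _ (inv₀ X₀ hX₀𝔥) fun x hx => inv₀ X₀ hX₀𝔥 hx]
    exact lt_of_add_lt_add_left h
  rw [rho_L _ hX, rho_𝔥 _ hX, rho_X₀] at hwit₀
  rw [rho_L X₀ hX₀𝔥, rho_X₀_zero]
  linarith
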